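/- Let p be a prime, V a finite-dimensional ℚ_p-vector space, and L a ℤ_p-submodule of V. Let L_div = { x ∈ L : for all c ∈ ℚ_p, c • x ∈ L }, the largest ℚ_p-subspace of V contained in L (equivalently, the maximal divisible ℤ_p-submodule of L). Then the quotient L / L_div is a finitely generated free ℤ_p-module. -/

import Mathlib

/-!
Let `R` be a complete local principal ideal domain (for instance `ℤ_p`) with maximal ideal `𝔪` and
fraction field `K`. Put `W = L_div` and let `M` be the image of `L` in `V / W`, so `L / W ≃ M`.
Since `W` is the largest `K`-subspace in `L`, `M` contains no nonzero `K`-subspace. An element of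
`⋂ₙ 𝔪ⁿ M` is divisible in `M` by every nonzero scalar, hence spans a `K`-subspace inside `M`; so
`M` is `𝔪`-adically separated. As `M` is torsion-free of finite rank, `M / 𝔪 M` is
finite-dimensional over the residue field, and Nakayama's lemma for separated modules over a
complete ring makes `M` finitely generated. Being torsion-free over a principal ideal domain, it is
free.
-/

open IsLocalRing TensorProduct

section AdicNakayama

variable {R M : Type*} [CommRing R] [AddCommGroup M] [Module R M] (I : Ideal R)

theorem isPrecomplete_of_finite [IsPrecomplete I R] [Module.Finite R M] : IsPrecomplete I M := by
  refine AdicCompletion.of_surjective_iff.mp fun y ↦ ?_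
  obtain ⟨t, rfl⟩ := AdicCompletion.ofTensorProduct_surjective_of_finite I M y
  induction t with
  | zero => exact ⟨0, by simp only [map_zero]⟩
  | add s t hs ht =>
    obtain ⟨x, hx⟩ := hs
    obtain ⟨y, hy⟩ := ht
    exact ⟨x + y, by rw [map_add, map_add, hx, hy]⟩
  | tmul a x =>
    obtain ⟨r, rfl⟩ := AdicCompletion.of_surjective I R a
    exact ⟨r • x, (map_smul _ r x).trans (algebraMap_smul (AdicCompletion I R) r _).symm⟩

theorem finite_of_finite_quotient_smul_top [IsPrecomplete I R] [IsHausdorff I M]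
    [Module.Finite R (M ⧸ (I • ⊤ : Submodule R M))] : Module.Finite R M := by
  obtain ⟨n, f, hf⟩ := Module.Finite.exists_fin' R (M ⧸ (I • ⊤ : Submodule R M))
  obtain ⟨g, rfl⟩ := Module.projective_lifting_property _ f (Submodule.mkQ_surjective _)
  have := isPrecomplete_of_finite (M := Fin n → R) I
  exact .of_surjective g (surjective_of_mkQ_comp_surjective hf)

end AdicNakayama

section FlatOverLocalRing

variable {R M : Type*} [CommRing R] [IsLocalRing R] [AddCommGroup M] [Module R M] [Module.Flat R M]

theorem finite_residueField_tensorProduct_of_rank_lt_aleph0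
    (hM : Module.rank R M < Cardinal.aleph0) :
    Module.Finite (ResidueField R) (ResidueField R ⊗[R] M) := by
  obtain ⟨κ, v, -, hspan, hv⟩ :=
    exists_linearIndependent' (ResidueField R) (TensorProduct.mk R (ResidueField R) M 1)
  have hvR : LinearIndependent R v := Module.IsLocalRing.linearIndependent_of_flat v hv
  have : Finite κ := Cardinal.mk_lt_aleph0_iff.mp (hvR.cardinal_le_rank.trans_lt hM)
  have htop : Submodule.span (ResidueField R)
      (Set.range (TensorProduct.mk R (ResidueField R) M 1 ∘ v)) = ⊤ := by
    rw [hspan, (TensorProduct.mk_surjective R M (ResidueField R) residue_surjective).range_eq,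
      Submodule.span_univ]
  exact ⟨htop ▸ Submodule.fg_span (Set.finite_range _)⟩

theorem finite_of_rank_lt_aleph0_of_isHausdorff [IsPrecomplete (maximalIdeal R) R]
    [IsHausdorff (maximalIdeal R) M] (hM : Module.rank R M < Cardinal.aleph0) :
    Module.Finite R M := by
  have := finite_residueField_tensorProduct_of_rank_lt_aleph0 hM
  have : Module.Finite R (ResidueField R ⊗[R] M) := .trans (ResidueField R) _
  have hker : (TensorProduct.mk R (ResidueField R) M 1).ker = maximalIdeal R • ⊤ :=
    LinearMap.ker_tensorProductMk M
  have : Module.Finite R (M ⧸ (maximalIdeal R • ⊤ : Submodule R M)) :=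
    hker ▸ .equiv (LinearMap.quotKerEquivOfSurjective _
      (TensorProduct.mk_surjective R M (ResidueField R) residue_surjective)).symm
  exact finite_of_finite_quotient_smul_top (maximalIdeal R)

end FlatOverLocalRing

section DivPart

variable {R V : Type*} (K : Type*) [CommRing R] [CommRing K] [AddCommGroup V] [Module R V]
  [Module K V]

/-- The divisible part of an `R`-submodule `L` of a `K`-module: the largest `K`-submodule contained
in `L`. It is bundled as a `K`-submodule; membership in `L` is the case `c = 1`. -/
def divPart (L : Submodule R V) : Submodule K V where
  carrier := {x | ∀ c : K, c • x ∈ L}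
  zero_mem' c := by simp
  add_mem' {x y} hx hy c := smul_add c x y ▸ L.add_mem (hx c) (hy c)
  smul_mem' a x hx c := smul_smul c a x ▸ hx (c * a)

variable {K}

theorem mem_of_mem_divPart {L : Submodule R V} {x : V} (hx : x ∈ divPart K L) : x ∈ L :=
  one_smul K x ▸ hx 1

variable [Algebra R K] [IsScalarTower R K V]

variable (K) in
theorem divPart_map_mkQ_divPart (L : Submodule R V) :
    divPart K (L.map ((divPart K L).mkQ.restrictScalars R)) = ⊥ := by
  refine (Submodule.eq_bot_iff _).mpr fun y hy ↦ ?_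
  obtain ⟨x, rfl⟩ := (divPart K L).mkQ_surjective y
  suffices hx : x ∈ divPart K L by simpa using hx
  intro c
  obtain ⟨z, hz, hzx⟩ := hy c
  have hsub : c • x - z ∈ divPart K L := (Submodule.Quotient.eq _).mp hzx.symm
  exact (L.sub_mem_iff_left hz).mp (mem_of_mem_divPart hsub)

/-- The isomorphism of `L / (L ∩ W)` with the image of `L` in `V / W`. -/
noncomputable def quotientComapEquivMapMkQ (L : Submodule R V) (W : Submodule K V) :
    (L ⧸ (W.restrictScalars R).comap L.subtype) ≃ₗ[R] L.map (W.mkQ.restrictScalars R) :=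
  Submodule.quotEquivOfEq _ _ (by
      rw [LinearMap.ker_submoduleMap, LinearMap.ker_restrictScalars, Submodule.ker_mkQ]) ≪≫ₗ
    ((W.mkQ.restrictScalars R).submoduleMap L).quotKerEquivOfSurjective
      (LinearMap.submoduleMap_surjective _ L)

end DivPart

section FractionField

variable {R K V : Type*} [CommRing R] [IsDomain R] [IsPrincipalIdealRing R] [IsLocalRing R]
  [Field K] [Algebra R K] [IsFractionRing R K] [AddCommGroup V] [Module R V] [Module K V]
  [IsScalarTower R K V]

theorem isHausdorff_of_divPart_eq_bot {L : Submodule R V} (hL : divPart K L = ⊥) :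
    IsHausdorff (maximalIdeal R) L := by
  refine ⟨fun x hx ↦ ?_⟩
  suffices hxL : (x : V) ∈ divPart K L by simpa [hL] using hxL
  intro c
  obtain ⟨a, b, hb, rfl⟩ := IsFractionRing.div_surjective (A := R) c
  obtain ⟨n, hn⟩ := exists_maximalIdeal_pow_eq_of_principal R
    (IsPrincipalIdealRing.principal _) (Ideal.span {b})
    (by simpa using nonZeroDivisors.ne_zero hb)
  have hxb : x ∈ Ideal.span {b} • (⊤ : Submodule R L) := hn ▸ SModEq.zero.mp (hx n)
  rw [Submodule.ideal_span_singleton_smul] at hxb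
  obtain ⟨y, -, rfl⟩ := (Submodule.mem_smul_pointwise_iff_exists _ _ _).mp hxb
  have hbK : algebraMap R K b ≠ 0 := IsFractionRing.to_map_ne_zero_of_mem_nonZeroDivisors hb
  have hay : (algebraMap R K a / algebraMap R K b) • ((b • y : L) : V) = a • (y : V) := by
    rw [Submodule.coe_smul, ← algebraMap_smul K b, smul_smul, div_mul_cancel₀ _ hbK,
      algebraMap_smul]
  exact hay ▸ L.smul_mem a y.2

theorem finite_free_of_divPart_eq_bot [FiniteDimensional K V] [IsPrecomplete (maximalIdeal R) R]
    {L : Submodule R V} (hL : divPart K L = ⊥) : Module.Finite R L ∧ Module.Free R L := by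
  have : Module.IsTorsionFree R V := .trans_faithfulSMul R K V
  have := isHausdorff_of_divPart_eq_bot hL
  have hV : Module.rank R V < Cardinal.aleph0 :=
    IsLocalization.rank_eq K (nonZeroDivisors R) (N := V) le_rfl ▸ Module.rank_lt_aleph0 K V
  have : Module.Finite R L :=
    finite_of_rank_lt_aleph0_of_isHausdorff (L.rank_le.trans_lt hV)
  exact ⟨this, inferInstance⟩

variable (K) in
theorem quotient_divPart_finite_free_general [FiniteDimensional K V]
    [IsPrecomplete (maximalIdeal R) R] (L : Submodule R V) :
    Module.Finite R (L ⧸ ((divPart K L).restrictScalars R).comap L.subtype) ∧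
      Module.Free R (L ⧸ ((divPart K L).restrictScalars R).comap L.subtype) := by
  have e := quotientComapEquivMapMkQ L (divPart K L)
  obtain ⟨_, _⟩ := finite_free_of_divPart_eq_bot (divPart_map_mkQ_divPart K L)
  exact ⟨.equiv e.symm, .of_equiv e.symm⟩

end FractionField

/-- Let `L` be a `ℤ_p`-submodule of a finite-dimensional `ℚ_p`-vector space `V`
and let `Ldiv` be its divisible part, i.e. the `ℤ_p`-submodule with underlying set
`{x ∈ L | ∀ c : ℚ_p, c • x ∈ L}` (the largest `ℚ_p`-subspace of `V` contained in
`L`). Then the quotient `L / Ldiv` is a finitely generated free `ℤ_p`-module. -/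
theorem quotient_divPart_finite_free (p : ℕ) [Fact p.Prime]
    (V : Type*) [AddCommGroup V] [Module ℚ_[p] V] [FiniteDimensional ℚ_[p] V]
    [Module ℤ_[p] V] [IsScalarTower ℤ_[p] ℚ_[p] V]
    (L Ldiv : Submodule ℤ_[p] V)
    (hdiv : (Ldiv : Set V) = {x | x ∈ L ∧ ∀ c : ℚ_[p], c • x ∈ L}) :
    Module.Finite ℤ_[p] (↥L ⧸ Submodule.comap L.subtype Ldiv) ∧
      Module.Free ℤ_[p] (↥L ⧸ Submodule.comap L.subtype Ldiv) := by
  obtain rfl : Ldiv = (divPart ℚ_[p] L).restrictScalars ℤ_[p] :=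
    SetLike.ext' <| hdiv.trans <| Set.ext fun _ ↦ and_iff_right_of_imp mem_of_mem_divPart
  exact quotient_divPart_finite_free_general ℚ_[p] L
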